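/- Let P be the Borel probability measure on ℝ with density f given by f(x) = 1/2 for x ∈ [0, 1/2] ∪ [1, 3/2], f(x) = 1 for x ∈ (1/2, 1), and f(x) = 0 otherwise. Then the set { (3 + 2√5)/44, 3(3 + 2√5)/44, 3/4, (57 − 6√5)/44, (63 − 2√5)/44 } ≈ {0.169821, 0.509464, 0.75, 0.990536, 1.330179} is an optimal set of five-means for P, and the fifth quantization error is V₅(P) = (109 − 30√5)/5808 ≈ 0.00721728. -/

import Mathlib

open MeasureTheory Set

/-- Distortion error of a set `α` with respect to the measure `Q`. -/
noncomputable def distortion (Q : Measure ℝ) (α : Set ℝ) : ℝ :=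
  ∫ x, sInf ((fun a => (x - a) ^ 2) '' α) ∂Q

/-- The `n`-th quantization error of the measure `Q`. -/
noncomputable def quantErr (Q : Measure ℝ) (n : ℕ) : ℝ :=
  sInf { v : ℝ | ∃ α : Set ℝ, α.Finite ∧ α.Nonempty ∧ α.ncard ≤ n ∧ v = distortion Q α }

/-- `α` is an optimal set of `n`-means for `Q`. -/
def IsOptimal (Q : Measure ℝ) (n : ℕ) (α : Set ℝ) : Prop :=
  α.Finite ∧ 1 ≤ α.ncard ∧ α.ncard ≤ n ∧ distortion Q α = quantErr Q n

/-- The density of the mixed distribution `P = (1/2) P₁ + (1/2) P₂`. -/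
noncomputable def f2 (x : ℝ) : ℝ :=
  if x ∈ Icc (0 : ℝ) (1 / 2) ∪ Icc (1 : ℝ) (3 / 2) then 1 / 2
  else if x ∈ Ioo (1 / 2 : ℝ) 1 then 1
  else 0

/-- The mixed distribution `P = (1/2) P₁ + (1/2) P₂`. -/
noncomputable def P2 : Measure ℝ :=
  volume.withDensity fun x => ENNReal.ofReal (f2 x)

/-- The basic half-cell length `(3 + 2√5)/44`, written `pP`. -/
noncomputable def pP : ℝ := (3 + 2 * Real.sqrt 5) / 44

lemma pP_sq : pP ^ 2 = (24 * pP + 1) / 176 := by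
  have h : Real.sqrt 5 ^ 2 = 5 := Real.sq_sqrt (by norm_num)
  unfold pP
  nlinarith [h]

lemma pP_lo : 0.1698212 < pP := by
  have h : (2.2360675 : ℝ) < Real.sqrt 5 := Real.lt_sqrt_of_sq_lt (by norm_num)
  unfold pP
  linarith

lemma pP_hi : pP < 0.1698214 := by
  have h : Real.sqrt 5 < (2.236069 : ℝ) := by
    rw [Real.sqrt_lt' (by norm_num)]; norm_num
  unfold pP
  linarith

lemma pP_cube : pP ^ 3 = (752 * pP + 24) / 176 ^ 2 := by
  have h := pP_sq
  have : pP ^ 3 = pP * pP ^ 2 := by ring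
  rw [this, h]
  linear_combination (24 / 176) * h

noncomputable def pR : ℝ := 3 / 8 - 3 * pP / 2
noncomputable def pZ : ℝ := 3 * pP - 1 / 2
noncomputable def pK : ℝ := 139 / 50000
noncomputable def pD : ℝ := 2 * pP ^ 3 / 3 - pK
noncomputable def pJ : ℝ := pK - 4 * pR ^ 3 / 3

lemma pR_bd : 0.1202679 < pR ∧ pR < 0.1202682 := by
  have := pP_lo; have := pP_hi
  unfold pR; constructor <;> linarith

lemma pZ_bd : 0.0094636 < pZ ∧ pZ < 0.0094642 := by
  have := pP_lo; have := pP_hi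
  unfold pZ; constructor <;> linarith

lemma pD_bd : 0.000485 < pD ∧ pD < 0.0004851 := by
  have := pP_lo; have := pP_hi
  unfold pD pK; rw [pP_cube]; constructor <;> linarith

lemma pR_sq : pR ^ 2 = pP ^ 2 / 2 + pZ ^ 2 / 2 := by
  have := pP_sq
  unfold pR pZ
  linear_combination (-11/4) * this

lemma pJ_bd : 0.0004604 < pJ ∧ pJ < 0.0004606 := by
  have := pP_lo; have := pP_hi
  have h2 := pP_sq
  have h3 := pP_cube
  have : pR ^ 3 = 27/512 - 81/128 * pP + 81/32 * pP^2 - 27/8 * pP^3 := by unfold pR; ring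
  unfold pJ pK; rw [this, h2, h3]; constructor <;> linarith

noncomputable def qL (t : ℝ) : ℝ := max 0 (min 1 ((t - 3 / 16) * 8))
noncomputable def qM (t : ℝ) : ℝ := max 0 (min 1 ((t - 7 / 10) * 10))

lemma qL_nonneg (t : ℝ) : 0 ≤ qL t := le_max_left _ _
lemma qL_le_one (t : ℝ) : qL t ≤ 1 := max_le zero_le_one (min_le_left _ _)
lemma qM_nonneg (t : ℝ) : 0 ≤ qM t := le_max_left _ _
lemma qM_le_one (t : ℝ) : qM t ≤ 1 := max_le zero_le_one (min_le_left _ _)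
lemma qL_ge (t : ℝ) (h : (t - 3 / 16) * 8 ≤ 1) : (t - 3 / 16) * 8 ≤ qL t := by
  unfold qL; rw [min_eq_right h]; exact le_max_right _ _
lemma qL_le (t : ℝ) (h : 3 / 16 ≤ t) : qL t ≤ (t - 3 / 16) * 8 :=
  max_le (by linarith) (min_le_right _ _)
lemma qL_zero (t : ℝ) (h : t ≤ 3 / 16) : qL t = 0 := by
  unfold qL; apply max_eq_left; exact (min_le_right _ _).trans (by linarith)
lemma qL_one (t : ℝ) (h : 5 / 16 ≤ t) : qL t = 1 := by
  unfold qL; rw [min_eq_left (by linarith)]; norm_num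
lemma qM_zero (t : ℝ) (h : t ≤ 7 / 10) : qM t = 0 := by
  unfold qM; apply max_eq_left; exact (min_le_right _ _).trans (by linarith)
lemma qM_le (t : ℝ) (h : 7 / 10 ≤ t) : qM t ≤ (t - 7 / 10) * 10 :=
  max_le (by linarith) (min_le_right _ _)
lemma qM_refl (t : ℝ) : qM (3 / 2 - t) = 1 - qM t := by
  unfold qM
  rcases le_total t (7/10) with h | h
  · rw [min_eq_left (by linarith), min_eq_right (by linarith), max_eq_right (by norm_num),
      max_eq_left (by linarith)]; norm_num
  rcases le_total t (8/10) with h' | h'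
  · rw [min_eq_right (by linarith), min_eq_right (by linarith), max_eq_right (by linarith),
      max_eq_right (by linarith)]; linarith
  · rw [min_eq_right (by linarith), min_eq_left (by linarith), max_eq_left (by linarith),
      max_eq_right (by norm_num)]; norm_num

lemma tang (x c : ℝ) (h : 0 ≤ x + 2 * c) : 3 * c ^ 2 * x - 2 * c ^ 3 ≤ x ^ 3 := by
  nlinarith [mul_nonneg (sq_nonneg (x - c)) h]

/-- The three separated parts of a cell crossing `1/2`. -/
noncomputable def cA (r : ℝ) : ℝ := (r - pR) ^ 2 * (r + 2 * pR) / 3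
noncomputable def cB (p : ℝ) : ℝ := (p - pP) ^ 2 * (p + 2 * pP) / 6
noncomputable def cZ (z : ℝ) : ℝ := (z + pZ) ^ 2 * (2 * pZ - z) / 6

lemma cA_nonneg (r : ℝ) (h : 0 ≤ r) : 0 ≤ cA r := by
  have := pR_bd.1
  unfold cA; have : 0 ≤ r + 2 * pR := by linarith
  positivity
lemma cB_nonneg (r : ℝ) (h : 0 ≤ r) : 0 ≤ cB r := by
  have := pP_lo
  unfold cB; have : 0 ≤ r + 2 * pP := by linarith
  positivity

/-- numeric expansions of the three parts -/
lemma cA_ge (r : ℝ) (h : 0 ≤ r) : r ^ 3 / 3 - 0.0144645 * r + 0.0011597 ≤ cA r := by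
  obtain ⟨h1, h2⟩ := pR_bd
  have e : cA r = r ^ 3 / 3 - pR ^ 2 * r + 2 * pR ^ 3 / 3 := by unfold cA; ring
  have a2 : pR ^ 2 ≤ 0.0144645 := by nlinarith
  have a3 : 0.1202679 ^ 3 ≤ pR ^ 3 := by gcongr
  rw [e]
  norm_num at a2 a3 ⊢
  nlinarith

lemma cB_ge (r : ℝ) (h : 0 ≤ r) : r ^ 3 / 6 - 0.0144197 * r + 0.0016325 ≤ cB r := by
  have h1 := pP_lo
  have h2 := pP_hi
  have e : cB r = r ^ 3 / 6 - pP ^ 2 / 2 * r + pP ^ 3 / 3 := by unfold cB; ring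
  have a2 : pP ^ 2 / 2 ≤ 0.0144197 := by nlinarith
  have a3 : 0.1698212 ^ 3 ≤ pP ^ 3 := by gcongr
  rw [e]
  norm_num at a2 a3 ⊢
  nlinarith

lemma cZ_ge (z : ℝ) (h : 0 ≤ z) : -z ^ 3 / 6 + 0.0000447 * z + 0.00000028 ≤ cZ z := by
  obtain ⟨h1, h2⟩ := pZ_bd
  have e : cZ z = -z ^ 3 / 6 + pZ ^ 2 / 2 * z + pZ ^ 3 / 3 := by unfold cZ; ring
  have a2 : 0.0000447 ≤ pZ ^ 2 / 2 := by nlinarith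
  have a3 : 0.0094636 ^ 3 ≤ pZ ^ 3 := by gcongr
  rw [e]
  norm_num at a2 a3 ⊢
  nlinarith

lemma cZ_ge' (z : ℝ) (h : z ≤ 0) : -z ^ 3 / 6 + 0.0000448 * z + 0.00000028 ≤ cZ z := by
  obtain ⟨h1, h2⟩ := pZ_bd
  have e : cZ z = -z ^ 3 / 6 + pZ ^ 2 / 2 * z + pZ ^ 3 / 3 := by unfold cZ; ring
  have a2 : pZ ^ 2 / 2 ≤ 0.0000448 := by nlinarith
  have a3 : 0.0094636 ^ 3 ≤ pZ ^ 3 := by gcongr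
  rw [e]
  norm_num at a2 a3 ⊢
  nlinarith

lemma LM_a (r z : ℝ) (hr : 0 ≤ r) (hr1 : r ≤ 1) (hz1 : -1 ≤ z) (hz : z ≤ 2 * pZ)
    (h : 2 / 10 ≤ r - z) :
    0.004606 * (r - z - 2 / 10) ≤ cA r + cZ z := by
  have hA := cA_ge r hr
  have t1 := tang r 0.13809 (by linarith)
  rcases le_total z 0 with h0 | h0
  · have hZ := cZ_ge' z h0
    have t2 := tang (-z) 0.09644 (by linarith)
    norm_num at *
    nlinarith
  · have hz' : 0 ≤ cZ z := by unfold cZ; have : 0 ≤ 2 * pZ - z := by linarith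
                              positivity
    have t3 := tang r 0.2 (by linarith)
    norm_num at *
    linarith

lemma LM_b (r z : ℝ) (hz : 0 ≤ z) (h : 2 / 10 ≤ r - z) :
    0.004606 * (r - z - 2 / 10) ≤ cA r + cZ z := by
  have hA := cA_ge r (by linarith)
  have hZ := cZ_ge z hz
  obtain ⟨e, he⟩ : ∃ e, e = r - z - 2/10 := ⟨_, rfl⟩
  have he0 : 0 ≤ e := by linarith
  obtain rfl : r = z + 2/10 + e := by linarith
  norm_num at *
  have : 0 ≤ z ^ 3 := by positivity
  have : 0 ≤ e ^ 3 := by positivity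
  have : 0 ≤ z * e ^ 2 := by positivity
  have : 0 ≤ e * z ^ 2 := by positivity
  have : 0 ≤ e * z := by positivity
  nlinarith [sq_nonneg z, sq_nonneg e]

/-- One-variable estimate at the end of the ramp. -/
lemma LM_c (p z : ℝ) (hp : 0 ≤ p) (hz : 2 * pZ ≤ z) (h : z + p ≤ 3 / 16) :
    0 ≤ cB p + cZ z := by
  have h1 := pP_lo
  have h2 := pP_hi
  obtain ⟨h3, h4⟩ := pZ_bd
  have e1 : 0 ≤ pP - p - (z - 0.01768) := by linarith
  have e2 : 0 ≤ z - 0.01768 := by linarith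
  have e3 : (z - 0.01768) ^ 2 ≤ (p - pP) ^ 2 := by nlinarith
  have e4 : (z - 0.01768) ^ 2 * (p + 2 * pP) ≤ (p - pP) ^ 2 * (p + 2 * pP) :=
    mul_le_mul_of_nonneg_right e3 (by linarith)
  have e5 : (z - 0.01768) ^ 2 * 0.3396 ≤ (z - 0.01768) ^ 2 * (p + 2 * pP) :=
    mul_le_mul_of_nonneg_left (by linarith) (sq_nonneg _)
  have e6 : (z + pZ) ^ 2 * (z - 2 * pZ) ≤ (z + 0.0094642) ^ 2 * (z - 0.0189272) := by
    have : 0 ≤ z - 2 * pZ := by linarith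
    gcongr
    all_goals linarith
  have e7 : (z + 0.0094642) ^ 2 * (z - 0.0189272) ≤ (z - 0.01768) ^ 2 * 0.3396 := by
    have z1 : z ≤ 0.1875 := by norm_num at *; linarith
    have z0 : 0.0189272 ≤ z := by linarith
    have u1 : 0 ≤ (z - 0.0189272) ^ 2 * (0.1875 - z) := mul_nonneg (sq_nonneg _) (by linarith)
    norm_num at *
    nlinarith [sq_nonneg (z - 0.0189272)]
  unfold cB cZ
  linarith

/-- The ramp region. -/
lemma LM_d (r p z : ℝ) (hp : 0 ≤ p) (hr : 0 ≤ r) (hrz : z ≤ r) (hz : 2 * pZ ≤ z)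
    (h : 3 / 16 ≤ z + p) (h' : z + p ≤ 5 / 16) :
    0 ≤ cA r + cB p + cZ z + pD * (8 * (z + p - 3 / 16)) := by
  have h1 := pP_lo
  have h2 := pP_hi
  obtain ⟨h3, h4⟩ := pZ_bd
  obtain ⟨h5, h6⟩ := pD_bd
  have hA0 := cA_nonneg r hr
  have hZ := cZ_ge z (by linarith)
  have hB := cB_ge p hp
  have hD : 0.000485 * (8 * (z + p - 3 / 16)) ≤ pD * (8 * (z + p - 3 / 16)) :=
    mul_le_mul_of_nonneg_right h5.le (by linarith)
  rcases le_total z 0.0415 with hz1 | hz1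
  · -- move `p` down to `3/16 - z`
    have hc := LM_c (3 / 16 - z) z (by norm_num at *; linarith) hz (by linarith)
    have hmono : cB (3 / 16 - z) ≤ cB p + 0.000485 * (8 * (z + p - 3 / 16)) := by
      have e1 : cB p = p ^ 3 / 6 - pP ^ 2 / 2 * p + pP ^ 3 / 3 := by unfold cB; ring
      have e2 : cB (3 / 16 - z) =
        (3 / 16 - z) ^ 3 / 6 - pP ^ 2 / 2 * (3 / 16 - z) + pP ^ 3 / 3 := by unfold cB; ring
      have a2 : pP ^ 2 / 2 ≤ 0.0144197 := by nlinarith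
      have t := tang p (3 / 16 - z) (by norm_num at *; linarith)
      have y : 0.146 ≤ 3 / 16 - z := by norm_num at *; linarith
      have y2 : 0.0213 ≤ (3 / 16 - z) ^ 2 := by norm_num at *; nlinarith
      rw [e1, e2]
      have : 0 ≤ (z + p - 3 / 16) * ((3 / 16 - z) ^ 2 / 2 - pP ^ 2 / 2 + 0.00388) :=
        mul_nonneg (by linarith) (by norm_num at *; linarith)
      norm_num at *
      nlinarith
    linarith
  · have t := tang p 0.1452 (by linarith)
    rcases le_total z 0.1203 with hz2 | hz2
    · have : 0 ≤ (z - 0.0415) * (0.1203 - z) := mul_nonneg (by linarith) (by linarith)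
      have : 0 ≤ (z - 0.0415) * (0.1203 - z) * z := mul_nonneg this (by linarith)
      norm_num at *
      nlinarith
    · have hA := cA_ge z (by linarith)
      have hmono : cA z ≤ cA r := by
        have e1 : ∀ x, cA x = x ^ 3 / 3 - pR ^ 2 * x + 2 * pR ^ 3 / 3 := by intro x; unfold cA; ring
        rw [e1, e1]
        obtain ⟨h7, h8⟩ := pR_bd
        have a2 : pR ^ 2 ≤ 0.1203 ^ 2 := by gcongr; linarith
        have a3 : (0.1203 : ℝ) ^ 2 ≤ z ^ 2 := by gcongr
        have : 0 ≤ (r - z) * (z ^ 2 - pR ^ 2) := mul_nonneg (by linarith) (by linarith)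
        have t := tang r z (by linarith)
        nlinarith
      have t2 := tang z 0.1452 (by linarith)
      norm_num at *
      linarith

lemma LM_e (r z : ℝ) (hr : 0 ≤ r) (hrz : z ≤ r) (hz : 0 ≤ z) :
    0 ≤ cA r + cZ z + 0.000485 := by
  have hA := cA_ge r hr
  have hZ := cZ_ge z hz
  have t := tang r 0.1203 (by linarith)
  rcases le_total z 0.1203 with hz1 | hz1
  · have : z ^ 3 ≤ 0.1203 ^ 3 := by gcongr
    norm_num at *
    nlinarith
  · have t2 := tang r 0.1701 (by linarith)
    have : z ^ 3 ≤ r ^ 3 := by gcongr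
    norm_num at *
    nlinarith

lemma LM_poly (r p z : ℝ) (hp : 0 ≤ p) (hr : 0 ≤ r) (hrz : z ≤ r)
    (hs0 : 0 ≤ 1 / 2 - z - p) (ht1 : 1 / 2 - z + r ≤ 1) :
    0 ≤ cA r + cB p + cZ z + pD * (1 - qL (1 / 2 - z - p)) - pJ * qM (1 / 2 - z + r) := by
  have hB := cB_nonneg p hp
  have hA := cA_nonneg r hr
  obtain ⟨h3, h4⟩ := pZ_bd
  obtain ⟨h5, h6⟩ := pD_bd
  obtain ⟨h7, h8⟩ := pJ_bd
  have hD : 0 ≤ pD * (1 - qL (1 / 2 - z - p)) :=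
    mul_nonneg (by linarith) (by linarith [qL_le_one (1 / 2 - z - p)])
  rcases le_total (1 / 2 - z + r) (7 / 10) with ht | ht
  · rw [qM_zero _ ht]
    rcases le_total z (2 * pZ) with hz | hz
    · have : 0 ≤ cZ z := by
        unfold cZ
        have : 0 ≤ 2 * pZ - z := by linarith
        positivity
      linarith
    rcases le_total (z + p) (3 / 16) with hs | hs
    · have := LM_c p z hp hz hs
      linarith
    rcases le_total (z + p) (5 / 16) with hs' | hs'
    · have := LM_d r p z hp hr hrz hz hs hs'
      have q := qL_le (1 / 2 - z - p) (by linarith)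
      have : pD * (8 * (z + p - 3 / 16)) ≤ pD * (1 - qL (1 / 2 - z - p)) :=
        mul_le_mul_of_nonneg_left (by linarith) (by linarith)
      linarith
    · rw [qL_zero _ (by linarith)]
      have := LM_e r z hr hrz (by linarith)
      linarith
  · have q := qM_le _ ht
    have e1 : pJ * qM (1 / 2 - z + r) ≤ pJ * ((1 / 2 - z + r - 7 / 10) * 10) :=
      mul_le_mul_of_nonneg_left q (by linarith)
    have e2 : pJ * ((1 / 2 - z + r - 7 / 10) * 10) ≤ 0.0004606 * ((1 / 2 - z + r - 7 / 10) * 10) :=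
      mul_le_mul_of_nonneg_right h8.le (by linarith)
    have : 0.004606 * (r - z - 2 / 10) ≤ cA r + cZ z := by
      rcases le_total z (2 * pZ) with hz | hz
      · exact LM_a r z hr (by linarith) (by linarith) hz (by linarith)
      · exact LM_b r z (by linarith) (by linarith)
    norm_num at *
    linarith

lemma LL_poly (s t : ℝ) (hs : 0 ≤ s) (hst : s ≤ t) (ht : t ≤ 1 / 2) :
    pP ^ 2 / 2 * (t - s) - pD * (qL t - qL s) - pK ≤ (t - s) ^ 3 / 24 := by
  obtain ⟨d, hd⟩ : ∃ d, d = t - s := ⟨_, rfl⟩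
  have hd0 : 0 ≤ d := by linarith
  have h1 := pP_lo
  have h2 := pP_hi
  obtain ⟨h5, h6⟩ := pD_bd
  rw [← hd]
  have hg : 0 ≤ d ^ 3 / 24 - pP ^ 2 / 2 * d + 2 * pP ^ 3 / 3 := by
    have : 0 ≤ (d - 2 * pP) ^ 2 * (d + 4 * pP) := by
      have : 0 ≤ d + 4 * pP := by linarith
      positivity
    nlinarith
  have hk : pK = 2 * pP ^ 3 / 3 - pD := by unfold pD; ring
  suffices hmain : pD * (1 - (qL t - qL s)) ≤ d ^ 3 / 24 - pP ^ 2 / 2 * d + 2 * pP ^ 3 / 3 by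
    rw [hk]; linarith
  have hge : d ^ 3 / 24 - 0.0144197 * d + 0.003265 ≤
      d ^ 3 / 24 - pP ^ 2 / 2 * d + 2 * pP ^ 3 / 3 := by
    have a2 : pP ^ 2 / 2 ≤ 0.0144197 := by nlinarith
    have a3 : 0.1698212 ^ 3 ≤ pP ^ 3 := by gcongr
    norm_num at *
    nlinarith
  have tg := tang d 0.29 (by linarith)
  -- key linear bound
  have key : d ≤ 5 / 16 → pD * (8 * (5 / 16 - d)) ≤ d ^ 3 / 24 - pP ^ 2 / 2 * d + 2 * pP ^ 3 / 3 := by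
    intro h
    have : pD * (8 * (5 / 16 - d)) ≤ 0.0004851 * (8 * (5 / 16 - d)) :=
      mul_le_mul_of_nonneg_right h6.le (by linarith)
    norm_num at *
    linarith
  have key2 : d ≤ 3 / 16 → pD ≤ d ^ 3 / 24 - pP ^ 2 / 2 * d + 2 * pP ^ 3 / 3 := by
    intro h
    have := key (by linarith)
    have : 0 ≤ pD * (8 * (5 / 16 - d) - 1) := mul_nonneg (by linarith) (by linarith)
    linarith
  have one : ∀ x, x ≤ 1 → pD * x ≤ pD := fun x hx => by nlinarith
  rcases le_total d (3 / 16) with hd1 | hd1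
  · -- `q` is monotone
    have : qL s ≤ qL t := by unfold qL; gcongr
    exact (one _ (by linarith)).trans (key2 hd1)
  rcases le_total s (3 / 16) with hs1 | hs1
  · rw [qL_zero s hs1]
    rcases le_total t (5 / 16) with ht1 | ht1
    · have := qL_ge t (by linarith)
      refine le_trans ?_ (key (by linarith))
      exact mul_le_mul_of_nonneg_left (by linarith) (by linarith)
    · rw [qL_one t ht1]; linarith
  · have := qL_le s hs1
    rw [qL_one t (by linarith)]
    refine le_trans ?_ (key (by linarith))
    exact mul_le_mul_of_nonneg_left (by linarith) (by linarith)

/-- Value of the potential at the second optimal break point. -/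
noncomputable def pV : ℝ := pP ^ 3 / 2 + pR ^ 3 / 3 + pZ ^ 3 / 6 + 2 * pK
noncomputable def phiL (t : ℝ) : ℝ := pP ^ 2 / 2 * t - pD * qL t
noncomputable def phiM (t : ℝ) : ℝ := pV + pR ^ 2 * (t - 3 / 4 + pR) + pJ * qM t
noncomputable def pC : ℝ := pV + pR ^ 3 + pJ / 2
noncomputable def phi (t : ℝ) : ℝ :=
  if t ≤ 1 / 2 then phiL t else if t < 1 then phiM t else 2 * pC - phiL (3 / 2 - t)

lemma phiM_refl (t : ℝ) : phiM (3 / 2 - t) = 2 * pC - phiM t := by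
  unfold phiM pC; rw [qM_refl]; ring

lemma cell_LL (s t a : ℝ) (hs : 0 ≤ s) (hst : s ≤ t) (ht : t ≤ 1 / 2) :
    phiL t - phiL s - pK ≤ ((t - a) ^ 3 - (s - a) ^ 3) / 6 := by
  have := LL_poly s t hs hst ht
  have h2 : (t - s) ^ 3 / 24 ≤ ((t - a) ^ 3 - (s - a) ^ 3) / 6 := by
    nlinarith [mul_nonneg (sub_nonneg.2 hst) (sq_nonneg (t + s - 2 * a))]
  unfold phiL
  linarith

lemma cell_MM (s t a : ℝ) (hst : s ≤ t) :
    phiM t - phiM s - pK ≤ ((t - a) ^ 3 - (s - a) ^ 3) / 3 := by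
  have h2 : (t - s) ^ 3 / 12 ≤ ((t - a) ^ 3 - (s - a) ^ 3) / 3 := by
    nlinarith [mul_nonneg (sub_nonneg.2 hst) (sq_nonneg (t + s - 2 * a))]
  have hR := pR_bd.1
  have h3 : 0 ≤ (t - s - 2 * pR) ^ 2 * (t - s + 4 * pR) := by
    have : 0 ≤ t - s + 4 * pR := by linarith
    positivity
  have h4 : pJ * (qM t - qM s) ≤ pJ := by
    have := pJ_bd.1
    have := qM_nonneg s
    have := qM_le_one t
    nlinarith
  have h5 : pJ = pK - 4 * pR ^ 3 / 3 := rfl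
  unfold phiM
  nlinarith

lemma cell_LM (s t a : ℝ) (hs : 0 ≤ s) (hs' : s ≤ 1 / 2) (ht' : 1 / 2 ≤ t) (ht : t ≤ 1)
    (ha : s ≤ a) (ha' : a ≤ t) :
    phiM t - phiL s - pK ≤
      ((1 / 2 - a) ^ 3 - (s - a) ^ 3) / 6 + ((t - a) ^ 3 - (1 / 2 - a) ^ 3) / 3 := by
  have h := LM_poly (t - a) (a - s) (1 / 2 - a) (by linarith) (by linarith) (by linarith)
    (by linarith) (by linarith)
  have e1 : 1 / 2 - (1 / 2 - a) - (a - s) = s := by ring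
  have e2 : 1 / 2 - (1 / 2 - a) + (t - a) = t := by ring
  rw [e1, e2] at h
  have hsq := pR_sq
  have eA : cA (t - a) = (t - a) ^ 3 / 3 - pR ^ 2 * (t - a) + 2 * pR ^ 3 / 3 := by unfold cA; ring
  have eB : cB (a - s) = (a - s) ^ 3 / 6 - pP ^ 2 / 2 * (a - s) + pP ^ 3 / 3 := by unfold cB; ring
  have eZ : cZ (1 / 2 - a) = -(1 / 2 - a) ^ 3 / 6 + pZ ^ 2 / 2 * (1 / 2 - a) + pZ ^ 3 / 3 := by
    unfold cZ; ring
  rw [eA, eB, eZ] at h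
  have key : ((1 / 2 - a) ^ 3 - (s - a) ^ 3) / 6 + ((t - a) ^ 3 - (1 / 2 - a) ^ 3) / 3
      - (phiM t - phiL s - pK) =
      (t - a) ^ 3 / 3 - pR ^ 2 * (t - a) + 2 * pR ^ 3 / 3 +
      ((a - s) ^ 3 / 6 - pP ^ 2 / 2 * (a - s) + pP ^ 3 / 3) +
      (-(1 / 2 - a) ^ 3 / 6 + pZ ^ 2 / 2 * (1 / 2 - a) + pZ ^ 3 / 3) +
      pD * (1 - qL s) - pJ * qM t := by
    unfold phiM phiL pV pD
    have hc : -3 * pP ^ 3 / 2 - 2 * pR ^ 3 - pZ ^ 3 / 2 + pP ^ 2 / 4 + pR ^ 2 / 4 = 0 := by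
      have h2 := pP_sq
      have h3 := pP_cube
      have z : pZ ^ 3 = 27 * pP ^ 3 - 27 / 2 * pP ^ 2 + 9 / 4 * pP - 1 / 8 := by unfold pZ; ring
      have r : pR ^ 3 = 27/512 - 81/128 * pP + 81/32 * pP^2 - 27/8 * pP^3 := by unfold pR; ring
      have r' : pR ^ 2 = 9/64 - 9/8 * pP + 9/4 * pP^2 := by unfold pR; ring
      rw [z, r, r', h3, h2]
      ring
    linear_combination (1 / 2 - a) * hsq + hc
  linarith

lemma cell_LR (s t a : ℝ) (ha : s ≤ a) (ha' : a ≤ t) :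
    2 * pC - phiL (3 / 2 - t) - phiL s - pK ≤
      ((1 / 2 - a) ^ 3 - (s - a) ^ 3) / 6 + ((1 - a) ^ 3 - (1 / 2 - a) ^ 3) / 3
        + ((t - a) ^ 3 - (1 - a) ^ 3) / 6 := by
  have h1 := pP_lo
  have h2 := pP_hi
  obtain ⟨h3, h4⟩ := pZ_bd
  obtain ⟨h5, h6⟩ := pD_bd
  obtain ⟨h7, h8⟩ := pJ_bd
  obtain ⟨h9, h10⟩ := pR_bd
  have t1 := tang (t - a) pP (by linarith)
  have t2 := tang (a - s) pP (by linarith)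
  have q1 : pD * qL (3 / 2 - t) ≤ pD * 1 :=
    mul_le_mul_of_nonneg_left (qL_le_one _) (by linarith)
  have q2 : pD * qL s ≤ pD * 1 := mul_le_mul_of_nonneg_left (qL_le_one _) (by linarith)
  have c1 : pR ^ 3 ≤ 0.1202682 ^ 3 := by gcongr
  have c2 : pZ ^ 3 ≤ 0.0094642 ^ 3 := by gcongr
  have c3 : pP ^ 3 ≤ 0.1698214 ^ 3 := by gcongr
  have c4 : 0.1698212 ^ 2 ≤ pP ^ 2 := by gcongr
  have hb : 1 / 32 ≤ (1 - a) ^ 3 - (1 / 2 - a) ^ 3 := by nlinarith [sq_nonneg (a - 3 / 4)]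
  unfold phiL pC pV
  have hk : pK = 139 / 50000 := rfl
  rw [hk]
  norm_num at *
  nlinarith

lemma final_value : phiL 0 = 0 ∧ 2 * pC - 5 * pK = (109 - 30 * Real.sqrt 5) / 5808 := by
  constructor
  · unfold phiL; rw [qL_zero 0 (by norm_num)]; ring
  · have h5 : Real.sqrt 5 = 22 * pP - 3 / 2 := by unfold pP; ring
    have h2 := pP_sq
    have h3 := pP_cube
    rw [h5]
    unfold pC pV pJ
    have z : pZ ^ 3 = 27 * pP ^ 3 - 27 / 2 * pP ^ 2 + 9 / 4 * pP - 1 / 8 := by unfold pZ; ring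
    have r : pR ^ 3 = 27/512 - 81/128 * pP + 81/32 * pP^2 - 27/8 * pP^3 := by unfold pR; ring
    rw [z, r, h3, h2]
    ring

lemma f2_L {x : ℝ} (h0 : 0 ≤ x) (h1 : x ≤ 1 / 2) : f2 x = 1 / 2 := by
  unfold f2; exact if_pos (Or.inl ⟨h0, h1⟩)

lemma f2_R {x : ℝ} (h0 : 1 ≤ x) (h1 : x ≤ 3 / 2) : f2 x = 1 / 2 := by
  unfold f2; exact if_pos (Or.inr ⟨h0, h1⟩)

lemma f2_M {x : ℝ} (h0 : 1 / 2 < x) (h1 : x < 1) : f2 x = 1 := by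
  unfold f2
  rw [if_neg, if_pos ⟨h0, h1⟩]
  rintro (h | h)
  · exact absurd h.2 (by linarith)
  · exact absurd h.1 (by linarith)

lemma f2_out {x : ℝ} (h : x ∉ Icc (0 : ℝ) (3 / 2)) : f2 x = 0 := by
  unfold f2
  rw [if_neg, if_neg]
  · intro h'; exact h ⟨by linarith [h'.1], by linarith [h'.2]⟩
  · rintro (h' | h')
    · exact h ⟨h'.1, by linarith [h'.2]⟩
    · exact h ⟨by linarith [h'.1], h'.2⟩

lemma f2_nonneg (x : ℝ) : 0 ≤ f2 x := by unfold f2; split_ifs <;> norm_num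
lemma f2_le (x : ℝ) : f2 x ≤ 1 := by unfold f2; split_ifs <;> norm_num

lemma f2_meas : Measurable f2 := by
  unfold f2
  refine Measurable.ite (measurableSet_Icc.union measurableSet_Icc) measurable_const ?_
  exact Measurable.ite measurableSet_Ioo measurable_const measurable_const

lemma f2_int (a b : ℝ) : IntervalIntegrable f2 volume a b := by
  refine IntervalIntegrable.mono_fun' (g := fun _ => (1 : ℝ)) intervalIntegrable_const
    f2_meas.aestronglyMeasurable ?_
  filter_upwards with x
  rw [Real.norm_of_nonneg (f2_nonneg x)]
  exact f2_le x

lemma f2g_int {g : ℝ → ℝ} (hg : Continuous g) (a b : ℝ) :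
    IntervalIntegrable (fun x => f2 x * g x) volume a b :=
  (f2_int a b).mul_continuousOn hg.continuousOn

lemma cont_sq (a : ℝ) : Continuous fun x : ℝ => (x - a) ^ 2 := by fun_prop

lemma int_sq (s t a : ℝ) : ∫ x in s..t, (x - a) ^ 2 = ((t - a) ^ 3 - (s - a) ^ 3) / 3 := by
  rw [intervalIntegral.integral_comp_sub_right (fun x => x ^ 2), integral_pow]
  norm_num

lemma int_L (s t a : ℝ) (hs : 0 ≤ s) (hst : s ≤ t) (ht : t ≤ 1 / 2) :
    ∫ x in s..t, f2 x * (x - a) ^ 2 = ((t - a) ^ 3 - (s - a) ^ 3) / 6 := by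
  rw [intervalIntegral.integral_congr_Ioo_of_le (g := fun x => (1 / 2) * (x - a) ^ 2) hst]
  · rw [intervalIntegral.integral_const_mul, int_sq]; ring
  · intro x hx
    simp only
    rw [f2_L (by linarith [hx.1]) (by linarith [hx.2])]

lemma int_R (s t a : ℝ) (hs : 1 ≤ s) (hst : s ≤ t) (ht : t ≤ 3 / 2) :
    ∫ x in s..t, f2 x * (x - a) ^ 2 = ((t - a) ^ 3 - (s - a) ^ 3) / 6 := by
  rw [intervalIntegral.integral_congr_Ioo_of_le (g := fun x => (1 / 2) * (x - a) ^ 2) hst]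
  · rw [intervalIntegral.integral_const_mul, int_sq]; ring
  · intro x hx
    simp only
    rw [f2_R (by linarith [hx.1]) (by linarith [hx.2])]

lemma int_M (s t a : ℝ) (hs : 1 / 2 ≤ s) (hst : s ≤ t) (ht : t ≤ 1) :
    ∫ x in s..t, f2 x * (x - a) ^ 2 = ((t - a) ^ 3 - (s - a) ^ 3) / 3 := by
  rw [intervalIntegral.integral_congr_Ioo_of_le (g := fun x => (x - a) ^ 2) hst]
  · rw [int_sq]
  · intro x hx
    simp only
    rw [f2_M (by linarith [hx.1]) (by linarith [hx.2]), one_mul]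

lemma int_split {g : ℝ → ℝ} (hg : Continuous g) (a b c : ℝ) :
    ∫ x in a..c, f2 x * g x = (∫ x in a..b, f2 x * g x) + ∫ x in b..c, f2 x * g x :=
  (intervalIntegral.integral_add_adjacent_intervals (f2g_int hg a b) (f2g_int hg b c)).symm

lemma cell' (s t a : ℝ) (hs : 0 ≤ s) (ha : s ≤ a) (ha' : a ≤ t) (ht : t ≤ 3 / 2) :
    phi t - phi s - pK ≤ ∫ x in s..t, f2 x * (x - a) ^ 2 := by
  have hst : s ≤ t := ha.trans ha'
  have hc := cont_sq a
  rcases le_or_gt s (1 / 2) with h1 | h1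
  · have es : phi s = phiL s := by unfold phi; rw [if_pos h1]
    rcases le_or_gt t (1 / 2) with h2 | h2
    · have et : phi t = phiL t := by unfold phi; rw [if_pos h2]
      rw [es, et, int_L s t a hs hst h2]
      exact cell_LL s t a hs hst h2
    rcases lt_or_ge t 1 with h3 | h3
    · have et : phi t = phiM t := by unfold phi; rw [if_neg (by linarith), if_pos h3]
      rw [es, et, int_split hc s (1 / 2) t, int_L s _ a hs h1 le_rfl,
        int_M _ t a le_rfl h2.le h3.le]
      exact cell_LM s t a hs h1 h2.le h3.le ha ha'
    · have et : phi t = 2 * pC - phiL (3 / 2 - t) := by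
        unfold phi; rw [if_neg (by linarith), if_neg (by linarith)]
      rw [es, et, int_split hc s (1 / 2) t, int_split hc (1 / 2) 1 t,
        int_L s _ a hs h1 le_rfl, int_M _ _ a le_rfl (by norm_num) le_rfl,
        int_R _ t a le_rfl h3 ht]
      have := cell_LR s t a ha ha'
      linarith
  rcases lt_or_ge s 1 with h4 | h4
  · have es : phi s = phiM s := by unfold phi; rw [if_neg (by linarith), if_pos h4]
    rcases lt_or_ge t 1 with h3 | h3
    · have et : phi t = phiM t := by unfold phi; rw [if_neg (by linarith), if_pos h3]
      rw [es, et, int_M s t a h1.le hst h3.le]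
      exact cell_MM s t a hst
    · have et : phi t = 2 * pC - phiL (3 / 2 - t) := by
        unfold phi; rw [if_neg (by linarith), if_neg (by linarith)]
      rw [es, et, int_split hc s 1 t, int_M s _ a h1.le h4.le le_rfl, int_R _ t a le_rfl h3 ht]
      have := cell_LM (3 / 2 - t) (3 / 2 - s) (3 / 2 - a) (by linarith) (by linarith)
        (by linarith) (by linarith) (by linarith) (by linarith)
      rw [phiM_refl] at this
      refine le_trans (by linarith) (this.trans (le_of_eq ?_))
      ring
  · have es : phi s = 2 * pC - phiL (3 / 2 - s) := by
      unfold phi; rw [if_neg (by linarith), if_neg (by linarith)]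
    have et : phi t = 2 * pC - phiL (3 / 2 - t) := by
      unfold phi; rw [if_neg (by linarith), if_neg (by linarith)]
    rw [es, et, int_R s t a h4 hst ht]
    have := cell_LL (3 / 2 - t) (3 / 2 - s) (3 / 2 - a) (by linarith) (by linarith) (by linarith)
    refine le_trans (by linarith) (this.trans (le_of_eq ?_))
    ring

lemma mono_g {g h : ℝ → ℝ} (hg : Continuous g) (hh : Continuous h) (s t : ℝ) (hst : s ≤ t)
    (H : ∀ x ∈ Icc s t, g x ≤ h x) :
    ∫ x in s..t, f2 x * g x ≤ ∫ x in s..t, f2 x * h x :=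
  intervalIntegral.integral_mono_on hst (f2g_int hg s t) (f2g_int hh s t)
    fun x hx => mul_le_mul_of_nonneg_left (H x hx) (f2_nonneg x)

lemma cell (s t a : ℝ) (hs : 0 ≤ s) (hst : s ≤ t) (ht : t ≤ 3 / 2) :
    phi t - phi s - pK ≤ ∫ x in s..t, f2 x * (x - a) ^ 2 := by
  rcases lt_or_ge a s with h | h
  · refine (cell' s t s hs le_rfl hst ht).trans (mono_g (cont_sq s) (cont_sq a) s t hst ?_)
    intro x hx
    have := hx.1
    nlinarith
  rcases le_or_gt a t with h' | h'
  · exact cell' s t a hs h h' ht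
  · refine (cell' s t t hs hst le_rfl ht).trans (mono_g (cont_sq t) (cont_sq a) s t hst ?_)
    intro x hx
    have := hx.2
    nlinarith

lemma lower (S : Finset ℝ) : ∀ t : ℝ, 0 ≤ t → t ≤ 3 / 2 → ∀ g : ℝ → ℝ, Continuous g →
    (∀ x ∈ Icc 0 t, ∃ a ∈ S, (x - a) ^ 2 ≤ g x) →
    phi t - phi 0 - S.card * pK ≤ ∫ x in (0 : ℝ)..t, f2 x * g x := by
  have hK : 0 < pK := by unfold pK; norm_num
  induction S using Finset.induction_on_max with
  | empty =>
    intro t h0 _ g _ H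
    obtain ⟨a, ha, _⟩ := H 0 ⟨le_rfl, h0⟩
    simp at ha
  | insert a S hmax ih =>
    intro t h0 h1 g hg H
    have hcard : ((insert a S).card : ℝ) = S.card + 1 := by
      rw [Finset.card_insert_of_notMem]
      · push_cast; rfl
      · intro h; exact lt_irrefl _ (hmax a h)
    rw [hcard]
    have hcn : (0 : ℝ) ≤ S.card * pK := by positivity
    -- if `a` serves everything
    have single : (∀ x ∈ Icc 0 t, (x - a) ^ 2 ≤ g x) →
        phi t - phi 0 - (S.card + 1) * pK ≤ ∫ x in (0 : ℝ)..t, f2 x * g x := by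
      intro hh
      have := (cell 0 t a le_rfl h0 h1).trans (mono_g (cont_sq a) hg 0 t h0 hh)
      linarith
    rcases S.eq_empty_or_nonempty with rfl | hne
    · apply single
      intro x hx
      obtain ⟨b, hb, h⟩ := H x hx
      simp at hb
      rwa [hb] at h
    obtain ⟨b, hbS, hbmax⟩ : ∃ b ∈ S, ∀ c ∈ S, c ≤ b :=
      ⟨S.max' hne, S.max'_mem hne, fun c hc => S.le_max' c hc⟩
    have hba := hmax b hbS
    have right : ∀ x ∈ Icc 0 t, (a + b) / 2 ≤ x → (x - a) ^ 2 ≤ g x := by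
      intro x hx hx2
      obtain ⟨c, hc, h⟩ := H x hx
      rcases Finset.mem_insert.1 hc with rfl | hc
      · exact h
      · have := hbmax c hc
        nlinarith
    have left : ∀ x ∈ Icc 0 t, x ≤ (a + b) / 2 → ∃ c ∈ S, (x - c) ^ 2 ≤ g x := by
      intro x hx hx2
      obtain ⟨c, hc, h⟩ := H x hx
      rcases Finset.mem_insert.1 hc with rfl | hc
      · exact ⟨b, hbS, by nlinarith⟩
      · exact ⟨c, hc, h⟩
    rcases lt_or_ge ((a + b) / 2) 0 with hm | hm
    · exact single fun x hx => right x hx (by linarith [hx.1])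
    rcases le_or_gt ((a + b) / 2) t with hm' | hm'
    · rw [int_split hg 0 ((a + b) / 2) t]
      have i1 := ih _ hm (hm'.trans h1) g hg
        (fun x hx => left x ⟨hx.1, hx.2.trans hm'⟩ hx.2)
      have i2 := (cell _ t a hm hm' h1).trans (mono_g (cont_sq a) hg _ t hm'
        (fun x hx => right x ⟨hm.trans hx.1, hx.2⟩ hx.1))
      linarith
    · have i1 := ih t h0 h1 g hg (fun x hx => left x hx (by linarith [hx.2]))
      linarith

/-- The distance function of a finite set. -/
lemma dist_props (S : Finset ℝ) (hS : S.Nonempty) :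
    ∃ g : ℝ → ℝ, Continuous g ∧ (∀ x, ∃ a ∈ S, (x - a) ^ 2 ≤ g x) ∧
      (∀ x, ∀ a ∈ S, g x ≤ (x - a) ^ 2) ∧
      distortion P2 S = ∫ x in (0 : ℝ)..(3 / 2), f2 x * g x := by
  refine ⟨fun x => S.inf' hS fun a => (x - a) ^ 2, ?_, ?_, ?_, ?_⟩
  · exact Continuous.finset_inf'_apply hS fun a _ => cont_sq a
  · intro x
    obtain ⟨a, ha, h⟩ := S.exists_mem_eq_inf' hS fun a => (x - a) ^ 2
    exact ⟨a, ha, h.ge⟩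
  · intro x a ha
    exact Finset.inf'_le _ ha
  · unfold distortion P2
    rw [integral_withDensity_eq_integral_toReal_smul f2_meas.ennreal_ofReal
      (Filter.Eventually.of_forall fun x => ENNReal.ofReal_lt_top)]
    rw [intervalIntegral.integral_of_le (by norm_num), ← integral_Icc_eq_integral_Ioc,
      setIntegral_eq_integral_of_forall_compl_eq_zero]
    · congr 1
      ext x
      rw [ENNReal.toReal_ofReal (f2_nonneg x), smul_eq_mul]
      simp only [Finset.inf'_eq_csInf_image]
    · intro x hx
      rw [f2_out hx, zero_mul]

lemma phi_tot : phi (3 / 2) - phi 0 - 5 * pK = (109 - 30 * Real.sqrt 5) / 5808 := by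
  obtain ⟨h0, h1⟩ := final_value
  unfold phi
  norm_num [h0]
  linarith

lemma lower_bound (S : Finset ℝ) (hS : S.Nonempty) (hc : S.card ≤ 5) :
    (109 - 30 * Real.sqrt 5) / 5808 ≤ distortion P2 S := by
  obtain ⟨g, hg, h1, _, h3⟩ := dist_props S hS
  rw [h3, ← phi_tot]
  have := lower S (3 / 2) (by norm_num) le_rfl g hg fun x _ => h1 x
  have hK : 0 < pK := by unfold pK; norm_num
  have : (S.card : ℝ) ≤ 5 := by exact_mod_cast hc
  nlinarith

/-- The optimal set. -/
noncomputable def optS : Finset ℝ :=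
  {(3 + 2 * Real.sqrt 5) / 44, 3 * (3 + 2 * Real.sqrt 5) / 44, 3 / 4,
        (57 - 6 * Real.sqrt 5) / 44, (63 - 2 * Real.sqrt 5) / 44}

lemma optS_eq : optS = {pP, 3 * pP, 3 / 4, 3 / 2 - 3 * pP, 3 / 2 - pP} := by
  unfold optS pP
  congr 2
  · ring
  · congr 2
    · ring
    · congr 1; ring

lemma upper_bound : distortion P2 optS ≤ (109 - 30 * Real.sqrt 5) / 5808 := by
  have l1 := pP_lo
  have l2 := pP_hi
  have hne : optS.Nonempty := ⟨3 / 4, by rw [optS_eq]; simp⟩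
  obtain ⟨g, hg, _, h2, h3⟩ := dist_props optS hne
  rw [h3]
  have m1 := mono_g hg (cont_sq pP) 0 (2 * pP) (by linarith)
    fun x _ => h2 x _ (by rw [optS_eq]; simp)
  have m2 := mono_g hg (cont_sq (3 * pP)) (2 * pP) (3 / 8 + 3 * pP / 2) (by linarith)
    fun x _ => h2 x _ (by rw [optS_eq]; simp)
  have m3 := mono_g hg (cont_sq (3 / 4)) (3 / 8 + 3 * pP / 2) (9 / 8 - 3 * pP / 2) (by linarith)
    fun x _ => h2 x _ (by rw [optS_eq]; simp)
  have m4 := mono_g hg (cont_sq (3 / 2 - 3 * pP)) (9 / 8 - 3 * pP / 2) (3 / 2 - 2 * pP)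
    (by linarith) fun x _ => h2 x _ (by rw [optS_eq]; simp)
  have m5 := mono_g hg (cont_sq (3 / 2 - pP)) (3 / 2 - 2 * pP) (3 / 2) (by linarith)
    fun x _ => h2 x _ (by rw [optS_eq]; simp)
  rw [int_L _ _ _ le_rfl (by linarith) (by linarith)] at m1
  rw [int_split (cont_sq _) _ (1 / 2) _, int_L _ _ _ (by linarith) (by linarith) le_rfl,
    int_M _ _ _ le_rfl (by linarith) (by linarith)] at m2
  rw [int_M _ _ _ (by linarith) (by linarith) (by linarith)] at m3
  rw [int_split (cont_sq _) _ 1 _, int_M _ _ _ (by linarith) (by linarith) le_rfl,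
    int_R _ _ _ le_rfl (by linarith) (by linarith)] at m4
  rw [int_R _ _ _ (by linarith) (by linarith) le_rfl] at m5
  rw [int_split hg 0 (2 * pP) (3 / 2), int_split hg (2 * pP) (3 / 8 + 3 * pP / 2) (3 / 2),
    int_split hg (3 / 8 + 3 * pP / 2) (9 / 8 - 3 * pP / 2) (3 / 2),
    int_split hg (9 / 8 - 3 * pP / 2) (3 / 2 - 2 * pP) (3 / 2)]
  have h5 : Real.sqrt 5 = 22 * pP - 3 / 2 := by unfold pP; ring
  rw [h5]
  have e2 := pP_sq
  have e3 := pP_cube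
  ring_nf at m1 m2 m3 m4 m5 ⊢
  ring_nf at e2 e3
  linarith

theorem stmt_8 :
    IsOptimal P2 5
      {(3 + 2 * Real.sqrt 5) / 44, 3 * (3 + 2 * Real.sqrt 5) / 44, 3 / 4,
        (57 - 6 * Real.sqrt 5) / 44, (63 - 2 * Real.sqrt 5) / 44} ∧
    quantErr P2 5 = (109 - 30 * Real.sqrt 5) / 5808 := by
  have hcoe : ({(3 + 2 * Real.sqrt 5) / 44, 3 * (3 + 2 * Real.sqrt 5) / 44, 3 / 4,
        (57 - 6 * Real.sqrt 5) / 44, (63 - 2 * Real.sqrt 5) / 44} : Set ℝ) = (optS : Set ℝ) := by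
    unfold optS; push_cast; rfl
  rw [hcoe]
  have hne : optS.Nonempty := ⟨3 / 4, by rw [optS_eq]; simp⟩
  have hcard : optS.card ≤ 5 := Finset.card_le_five
  have hval : distortion P2 optS = (109 - 30 * Real.sqrt 5) / 5808 :=
    le_antisymm upper_bound (lower_bound optS hne hcard)
  have hq : quantErr P2 5 = (109 - 30 * Real.sqrt 5) / 5808 := by
    unfold quantErr
    refine IsLeast.csInf_eq ⟨⟨optS, optS.finite_toSet, by simpa using hne, ?_, hval.symm⟩, ?_⟩
    · rw [Set.ncard_coe_finset]; exact hcard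
    · rintro v ⟨α, hf, hn, hc, rfl⟩
      lift α to Finset ℝ using hf
      rw [Set.ncard_coe_finset] at hc
      exact lower_bound α (by simpa using hn) hc
  refine ⟨⟨optS.finite_toSet, ?_, ?_, by rw [hq, hval]⟩, hq⟩
  · rw [Set.ncard_coe_finset]; exact hne.card_pos
  · rw [Set.ncard_coe_finset]; exact hcard
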